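/- Let G = N_{3,4}. For every finite family H₁, …, H_s of finite-index subgroups of G and every family of group homomorphisms f_i : H_i → G (1 ≤ i ≤ s), there exists a nontrivial subgroup N of the intersection ⋂_{i=1}^{s} H_i that is normal in G and satisfies f_i(N) ≤ N for all i = 1, …, s. (Consequently N_{3,4} admits no faithful state-closed representation on any regular rooted tree, transitive or not.) -/

import Mathlib

/-!
Write `p = [a, c]`, `q = [a, d]`, `r = [b, c]`, `s = [b, d]`, and `x = [a, q]`, `y = [a, b]`,
`z = [c, d]`, `w = [p, b]`, `v = [q, b]`. The defining relations express every triple commutator of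
the generators through `x, y, z, w, v`.

The subgroup `N` is generated by `z ^ (n ^ 3)`, where all `n`-th powers lie in `⋂ i, H i`. The
elements `A = a ^ n`, `B = b ^ n`, `C = c ^ n`, `D = d ^ n` satisfy the defining relations, except
that the last two become `[A, B] ^ n = [[A, C], C]` and `[C, D] ^ n = [A, [A, C]]` (`Rels n`), and
`[A, [A, C]] = z ^ (n ^ 3)`. Homomorphisms preserve `Rels n`, so it is enough that any solution of
`Rels n` in `N34` has `[A, [A, C]] ∈ {1, z ^ (n ^ 3)}`.

This is checked in the Malcev completion `Mal`, the class-three nilpotent Lie algebra over `ℚ` with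
basis `a, …, v` and the Baker–Campbell–Hausdorff product (`Mal.key`). The relations force
`[A, B] ^ n` and `[C, D] ^ n` to be triple commutators, so modulo the derived subalgebra each of the
pairs `A, B` and `C, D` is linearly dependent or spans one of the planes `⟨a, b⟩`, `⟨c, d⟩`. In every
case but one the remaining relations are contradictory or kill `[A, [A, C]]`; in the last one
`A, B, C, D` are, modulo the derived subalgebra, `n` times `a, b, c, d`.

To transfer this to `N34` one needs that `x, y, z, w, v` are central, which is a consequence of the
relations alone (`class_three`). Then all triple commutators of `N34` lie in the subgroup `N34.S`
generated by these five elements, and the homomorphism `N34.toMal` is injective there, because it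
sends the five elements to linearly independent central vectors.
-/

/-- The commutator `[x, y] = x⁻¹ y⁻¹ x y`. -/
def cmt {G : Type*} [Group G] (x y : G) : G := x⁻¹ * y⁻¹ * x * y

/-- The defining relators of the Bludov–Gusev group `N_{3,4}` on generators
`a, b, c, d` (indexed by `0, 1, 2, 3`). -/
def N34Rels : Set (FreeGroup (Fin 4)) :=
  let a : FreeGroup (Fin 4) := FreeGroup.of 0
  let b : FreeGroup (Fin 4) := FreeGroup.of 1
  let c : FreeGroup (Fin 4) := FreeGroup.of 2
  let d : FreeGroup (Fin 4) := FreeGroup.of 3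
  {cmt a (cmt a b), cmt (cmt a b) b, cmt a (cmt c d), cmt (cmt a d) d,
   cmt b (cmt b c), cmt b (cmt c d), cmt c (cmt c d), cmt (cmt c d) d,
   cmt a (cmt b c) * cmt (cmt a c) b,
   cmt a (cmt b d) * cmt (cmt a d) b,
   cmt a (cmt a d) * (cmt (cmt b c) c)⁻¹,
   cmt a (cmt a c) * (cmt b (cmt b d))⁻¹,
   cmt (cmt a c) b * (cmt (cmt b d) d)⁻¹,
   cmt (cmt a c) c * (cmt (cmt b d) c)⁻¹,
   cmt (cmt a d) b * (cmt (cmt a d) c)⁻¹,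
   cmt a b * (cmt (cmt a c) c)⁻¹,
   cmt c d * (cmt a (cmt a c))⁻¹}

/-- The Bludov–Gusev group `N_{3,4}`, presented on generators `a, b, c, d`. -/
abbrev N34 : Type := PresentedGroup N34Rels

/-- The generator `a` of `N_{3,4}`. -/
def ga : N34 := PresentedGroup.of 0
/-- The generator `b` of `N_{3,4}`. -/
def gb : N34 := PresentedGroup.of 1
/-- The generator `c` of `N_{3,4}`. -/
def gc : N34 := PresentedGroup.of 2
/-- The generator `d` of `N_{3,4}`. -/
def gd : N34 := PresentedGroup.of 3

/-! ### Centrality of the triple commutators -/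

/-- The conjugate `u ^ g = g⁻¹ u g`. -/
def cj {G : Type*} [Group G] (g u : G) : G := g⁻¹ * u * g

section Conj
variable {G : Type*} [Group G]

theorem cj_mul (g u v : G) : cj g (u * v) = cj g u * cj g v := by simp [cj, mul_assoc]
theorem cj_inv (g u : G) : cj g u⁻¹ = (cj g u)⁻¹ := by simp [cj, mul_assoc]
theorem cj_mul_left (g h u : G) : cj (g * h) u = cj h (cj g u) := by simp [cj, mul_assoc]
theorem cj_cj (g h u : G) : cj g (cj h u) = cj (cj g h) (cj g u) := by simp [cj, mul_assoc]
theorem cj_inj {g u v : G} (h : cj g u = cj g v) : u = v := by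
  simpa [cj] using h

/-- A relation `u ^ h = u t` conjugated by `g`. -/
theorem cj_rel {h u t : G} (H : cj h u = u * t) (g : G) :
    cj (cj g h) (cj g u) = cj g u * cj g t := by
  rw [← cj_cj, H, cj_mul]

theorem commute_iff_cj {u g : G} : Commute u g ↔ cj g u = u := by
  rw [cj, mul_assoc, inv_mul_eq_iff_eq_mul]; exact Iff.rfl

theorem cj_swap {g u t : G} (h : cj g u = u * t) : cj u g = g * t⁻¹ := by
  have ht : t = u⁻¹ * (g⁻¹ * u * g) := by rw [← cj, h]; group
  rw [ht]; simp [cj, mul_assoc]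

end Conj

theorem Commute.cj_eq {G : Type*} [Group G] {u g : G} (h : Commute u g) : cj g u = u :=
  commute_iff_cj.1 h
theorem Commute.cj_map {G : Type*} [Group G] {u v : G} (h : Commute u v) (g : G) :
    Commute (cj g u) (cj g v) := by
  rw [commute_iff_cj, ← cj_cj, h.cj_eq]
theorem Commute.of_cj_map {G : Type*} [Group G] {u v g : G} (h : Commute (cj g u) (cj g v)) :
    Commute u v := by
  rw [commute_iff_cj, ← cj_cj] at h
  exact commute_iff_cj.2 (cj_inj h)
theorem Commute.cancel_left {G : Type*} [Group G] {u v t : G} (h : Commute u (v * t))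
    (hv : Commute u v) : Commute u t := by
  simpa using hv.inv_right.mul_right h
theorem Commute.cancel_right {G : Type*} [Group G] {u v t : G} (h : Commute u (v * t))
    (ht : Commute u t) : Commute u v := by
  simpa using h.mul_right ht.inv_right

theorem commute_of_rel {G : Type*} [Group G] {e u g t : G} (h : cj g u = u * t)
    (hu : Commute e u) (hg : Commute e g) : Commute e t := by
  have : t = u⁻¹ * (g⁻¹ * u * g) := by rw [← cj, h]; group
  rw [this]
  exact hu.inv_right.mul_right ((hg.inv_right.mul_right hu).mul_right hg)

/-- The defining relations of `N34`, with the named commutators as variables, imply that `x, y, w, v`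
commute with the generators and determine `[p, d]` and `[r, d]`. A relation `[u, g] = t` is written
`u ^ g = u t`, and new relations arise by conjugating such a relation with a generator: both sides
are rewritten using the known actions of the generators, and what does not cancel is a commutation
relation. -/
theorem class_three {G : Type*} [Group G] {a b c d p q r s x y z w v : G}
    (ac : cj c a = a * p) (ad : cj d a = a * q) (bc : cj c b = b * r) (bd : cj d b = b * s)
    (ab : cj b a = a * y) (cd : cj d c = c * z)
    (ya : Commute y a) (yb : Commute y b)
    (hz : ∀ g, Commute z g)
    (pa : cj a p = p * z⁻¹) (pb : cj b p = p * w) (pc : cj c p = p * y)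
    (qa : cj a q = q * x⁻¹) (qb : cj b q = q * v) (qc : cj c q = q * v) (qd : Commute q d)
    (ra : cj a r = r * w) (rb : Commute r b) (rc : cj c r = r * x)
    (sa : cj a s = s * v) (sb : cj b s = s * z⁻¹) (sc : cj c s = s * y) (sd : cj d s = s * w) :
    (∀ t ∈ [x, y, w, v], Commute t a ∧ Commute t b ∧ Commute t c ∧ Commute t d) ∧
      cj d p = p * v ∧ cj d r = r * y := by
  have zi : ∀ g, Commute g z⁻¹ := fun g => (hz g).symm.inv_right
  have cz : ∀ g : G, cj g z = z := fun g => (hz g).cj_eq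
  have zc : ∀ g : G, cj z g = g := fun g => (hz g).symm.cj_eq
  have ca := cj_swap ac
  have cb := cj_swap bc
  have db := cj_swap bd
  have ba := cj_swap ab
  have dc := cj_swap cd
  -- `[p, c] = y` conjugated by `a`
  have yp : Commute y p := by
    have h := cj_rel pc a
    rw [ca, pa, ya.cj_eq, cj_mul_left, cj_mul, cj_inv, cz, pc, cj_mul, cj_mul, cj_inv, cz,
      (Commute.refl p).inv_right.cj_eq, mul_assoc, mul_assoc, mul_right_inj, ← (zi _).eq,
      mul_left_inj] at h
    simpa using (commute_iff_cj.2 h).inv_right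
  have yw : Commute y w := commute_of_rel pb yp yb
  -- `[p, a] = z⁻¹` conjugated by `b`
  have wa : Commute w a := by
    have h := cj_rel pa b
    rw [ab, pb, cj_inv, cz, cj_mul_left, cj_mul, pa, cj_mul, cj_mul, cj_inv, cz,
      yp.symm.cj_eq, mul_assoc, mul_assoc, mul_right_inj, ← (zi _).eq, mul_left_inj,
      ← cj_mul_left, ← commute_iff_cj] at h
    exact h.cancel_right yw.symm
  -- `[q, d] = 1` conjugated by `c` and by `b`
  have qvd : Commute (q * v) d := by
    have h := qd.cj_map c
    rw [qc, dc] at h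
    exact h.cancel_right (zi _)
  have vd : Commute v d := (qvd.symm.cancel_left qd.symm).symm
  have qvs : Commute (q * v) s := by
    have h := qd.cj_map b
    rw [qb, db] at h
    simpa using (h.cancel_left qvd).inv_right
  have qs : Commute q s := by
    apply Commute.of_cj_map (g := b)
    rw [qb, sb]
    exact qvs.mul_right (zi _)
  have vs : Commute v s := (qvs.symm.cancel_left qs.symm).symm
  have qw : Commute q w := by
    have h := qs.cj_map d
    rw [qd.cj_eq, sd] at h
    exact h.cancel_left qs
  have vw : Commute v w := by
    have h := vs.cj_map d
    rw [vd.cj_eq, sd] at h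
    exact h.cancel_left vs
  -- `[q, s] = 1` conjugated by `c`; then `q v = q ^ b` and `y = y ^ b`
  have qvy : Commute (q * v) y := by
    have h := qs.cj_map c
    rw [qc, sc] at h
    exact h.cancel_left qvs
  have qy : Commute q y := by
    apply Commute.of_cj_map (g := b)
    rwa [qb, yb.cj_eq]
  have vy : Commute v y := (qvy.symm.cancel_left qy.symm).symm
  -- `[s, a] = v` conjugated by `d`
  have vq : Commute v q := by
    have h := cj_rel sa d
    rw [ad, sd, vd.cj_eq, cj_mul_left, cj_mul, sa, wa.cj_eq, cj_mul, cj_mul, qs.symm.cj_eq,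
      qw.symm.cj_eq, mul_assoc, mul_assoc, mul_right_inj, ← vw.eq, mul_left_inj] at h
    exact commute_iff_cj.2 h
  have yx : Commute y x := by simpa using (commute_of_rel qa qy.symm ya).inv_right
  have wx : Commute w x := by simpa using (commute_of_rel qa qw.symm wa).inv_right
  -- `[a, b] = y` conjugated by `d`
  have yd : Commute y d := by
    have h := cj_rel ab d
    have e : Commute q (cj s y) := by
      have := qy.cj_map s
      rwa [qs.cj_eq] at this
    have e' : Commute v (cj s y) := by
      have := vy.cj_map s
      rwa [vs.cj_eq] at this
    rw [ad, bd, cj_mul_left, cj_mul, ab, qb, cj_mul, cj_mul, cj_mul, qs.cj_eq, vs.cj_eq,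
      cj_swap sa, ← vq.eq, mul_assoc a v⁻¹, e'.inv_left.eq, mul_assoc, mul_assoc,
      inv_mul_cancel_left, ← e.eq, mul_assoc, mul_right_inj, mul_right_inj] at h
    apply Commute.of_cj_map (g := b)
    rw [yb.cj_eq, db, commute_iff_cj, cj_mul_left, ← h, ← cj_mul_left, mul_inv_cancel]
    simp [cj]
  have ys : Commute y s := commute_of_rel bd yb yd
  -- `[s, a] = v` conjugated by `b`
  have vb : Commute v b := by
    have h := cj_rel sa b
    rw [ab, sb, cj_mul_left, cj_mul, cj_inv, cz, cj_mul, cj_inv, cz, sa, cj_mul, ys.symm.cj_eq,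
      vy.cj_eq, mul_assoc, mul_assoc, mul_right_inj, (zi v).eq, mul_right_inj] at h
    exact commute_iff_cj.2 h.symm
  -- `[s, c] = y` conjugated by `d`
  have wc : Commute w c := by
    have h := cj_rel sc d
    rw [cd, sd, yd.cj_eq, cj_mul_left, zc, cj_mul, sc, mul_assoc, mul_assoc, mul_right_inj,
      ← yw.eq, mul_right_inj] at h
    exact commute_iff_cj.2 h
  have wp : Commute w p := commute_of_rel ac wa wc
  -- `[b, c] = r` and `[r, b] = 1` conjugated by `d`
  have rd' : cj d r = cj s r * y := by
    have h := cj_rel bc d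
    rw [bd, cd, cj_mul_left, zc, cj_mul, bc, sc] at h
    have : cj d r = (b * s)⁻¹ * (b * r * (s * y)) := by rw [h]; group
    rw [this]; simp [cj, mul_assoc]
  have rs : Commute r s := by
    have h := rb.cj_map d
    rw [rd', bd] at h
    have e : Commute (cj s r) b := by
      have := rb.cj_map s
      rw [cj_swap sb, inv_inv] at this
      exact this.cancel_right (hz _).symm
    have e2 : Commute s (cj s r * y) := (h.cancel_left (e.mul_left yb)).symm
    have e3 : Commute (cj s r) (cj s s) := by
      rw [(Commute.refl s).cj_eq]
      exact (e2.cancel_right ys.symm).symm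
    exact e3.of_cj_map
  have rd : cj d r = r * y := by rw [rd', rs.cj_eq]
  have r_w : Commute r w := by
    have h := rs.cj_map d
    rw [rd, sd] at h
    have h2 := h.cancel_left (rs.mul_left ys)
    exact (h2.symm.cancel_right yw.symm).symm
  -- `[p, b] = w` conjugated by `c`
  have pyr : Commute (p * y) r := by
    have h := cj_rel pb c
    rw [bc, pc, wc.cj_eq, cj_mul_left, cj_mul, pb, yb.cj_eq, mul_assoc, ← yw.eq, ← mul_assoc,
      cj_mul, r_w.symm.cj_eq, mul_left_inj] at h
    exact commute_iff_cj.2 h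
  -- `[a, b] = y` conjugated by `c`
  have yc : Commute y c := by
    have h := cj_rel ab c
    rw [ac, bc, cj_mul_left, cj_mul, ab, pb, mul_assoc a, ← mul_assoc y, yp.eq, cj_mul, cj_mul,
      pyr.cj_eq, r_w.symm.cj_eq, cj_swap ra, mul_assoc, mul_assoc, mul_assoc, mul_right_inj,
      yw.eq, ← mul_assoc p, ← wp.eq, mul_assoc w, inv_mul_cancel_left, mul_right_inj] at h
    exact commute_iff_cj.2 h.symm
  have yr : Commute y r := commute_of_rel bc yb yc
  have pr : Commute p r := (pyr.symm.cancel_right yr.symm).symm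
  -- `[r, a] = w` conjugated by `b`
  have wb : Commute w b := by
    have h := cj_rel ra b
    rw [ab, rb.cj_eq, cj_mul_left, ra, cj_mul, yr.symm.cj_eq, yw.symm.cj_eq, mul_right_inj] at h
    exact commute_iff_cj.2 h.symm
  -- `[r, c] = x` conjugated by `d`
  have xd : Commute x d := by
    have h := cj_rel rc d
    rw [rd, cd, cj_mul_left, zc, cj_mul, rc, yc.cj_eq, mul_assoc, mul_assoc, mul_right_inj,
      ← yx.eq, mul_right_inj] at h
    exact commute_iff_cj.2 h.symm
  have xq : Commute x q := by
    have h := cj_rel qa d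
    rw [ad, qd.cj_eq, cj_inv, xd.cj_eq, cj_mul_left, qa, cj_mul, cj_inv,
      (Commute.refl q).cj_eq, mul_right_inj, inv_inj] at h
    exact commute_iff_cj.2 h
  -- `[r, p] = 1` conjugated by `c`
  have xp : Commute x p := by
    have h := pr.cj_map c
    rw [pc, rc] at h
    have h2 : Commute (r * x) p := (h.symm.cancel_right (yr.symm.mul_left yx.symm))
    exact (h2.symm.cancel_left pr).symm
  -- `[a, c] = p` conjugated by `d`
  have pd' : cj d p = cj q p * v := by
    have h := cj_rel ac d
    rw [ad, cd, cj_mul_left, zc, cj_mul, ac, qc] at h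
    have : cj d p = (a * q)⁻¹ * (a * p * (q * v)) := by rw [h]; group
    rw [this]; simp [cj, mul_assoc]
  have xpq : Commute x (cj q p) := by
    have := xp.cj_map q
    rwa [xq.cj_eq] at this
  have xv : Commute x v := by
    have h := xp.cj_map d
    rw [xd.cj_eq, pd'] at h
    exact h.cancel_left xpq
  -- `u = [r, q] = w⁻¹ w ^ d`, which turns out to be trivial
  obtain ⟨u, rq⟩ : ∃ u, cj q r = r * u := ⟨r⁻¹ * cj q r, by group⟩
  have uy : Commute y u := commute_of_rel rq yr qy.symm
  have wd' : cj d w = u * w := by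
    have h := cj_rel ra d
    rw [ad, rd, cj_mul_left, cj_mul, ra, ya.cj_eq, cj_mul, cj_mul, rq, qw.symm.cj_eq,
      qy.symm.cj_eq, mul_assoc, mul_assoc, mul_assoc, mul_right_inj, ← yw.eq, ← mul_assoc] at h
    rw [← uy.eq, mul_assoc, mul_right_inj] at h
    exact h.symm
  have ur : Commute u r := by
    have h := r_w.cj_map d
    rw [rd, wd'] at h
    have h2 : Commute r (u * w) := (h.symm.cancel_right (uy.symm.mul_left yw.symm)).symm
    exact (h2.cancel_right r_w).symm
  -- `w` commutes with `c`, `q`, `a`, `v`; conjugated by `d`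
  have uc : Commute u c := by
    have h := wc.cj_map d
    rw [wd', cd] at h
    exact ((h.cancel_right (hz _).symm).symm.cancel_right wc.symm).symm
  have wdq : Commute (u * w) q := by
    have h := qw.cj_map d
    rw [wd', qd.cj_eq] at h
    exact h.symm
  have ua : Commute u a := by
    have h := wa.cj_map d
    rw [wd', ad] at h
    exact ((h.cancel_right wdq).symm.cancel_right wa.symm).symm
  have uv : Commute u v := by
    have h := vw.cj_map d
    rw [wd', vd.cj_eq] at h
    exact (h.cancel_right vw).symm
  have uw : Commute u w := commute_of_rel ra ur ua
  have ux : Commute u x := commute_of_rel rc ur uc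
  have up : Commute u p := commute_of_rel ac ua uc
  -- `[r, q] = u` conjugated by `a`
  have rx : Commute r x := by
    have h := cj_rel rq a
    rw [qa, ra, ua.cj_eq, cj_mul_left, cj_mul, rq, qw.symm.cj_eq, cj_mul, cj_mul,
      ux.inv_right.cj_eq, wx.inv_right.cj_eq, mul_assoc, mul_assoc, uw.eq, mul_left_inj] at h
    simpa using (commute_iff_cj.2 h).inv_right
  -- `[r, c] = x` conjugated by `b`
  have xb : Commute x b := by
    have h := cj_rel rc b
    rw [cb, rb.cj_eq, cj_mul_left, rc, cj_mul, (Commute.refl r).inv_right.cj_eq,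
      rx.symm.inv_right.cj_eq, mul_right_inj] at h
    exact commute_iff_cj.2 h.symm
  -- `[q, b] = v` conjugated by `a`
  have va : Commute v a := by
    have h := cj_rel qb a
    rw [qa, ba, cj_mul_left, cj_mul, cj_inv, qb, xb.cj_eq, cj_mul, cj_mul, cj_inv,
      qy.inv_right.cj_eq, vy.inv_right.cj_eq, yx.symm.inv_right.cj_eq, mul_assoc, mul_assoc,
      mul_right_inj, ← xv.inv_left.eq, mul_right_inj] at h
    exact commute_iff_cj.2 h.symm
  -- `[r, q] = u` conjugated by `c`
  have rv : Commute r v := by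
    have h := cj_rel rq c
    rw [qc, rc, uc.cj_eq, cj_mul_left, cj_mul, rq, xq.cj_eq, cj_mul, cj_mul, uv.cj_eq,
      xv.cj_eq, mul_assoc, mul_assoc, ux.eq, mul_left_inj] at h
    exact commute_iff_cj.2 h
  -- `[q, b] = v` conjugated by `c`
  have vc' : cj c v = u⁻¹ * v := by
    have h := cj_rel qb c
    rw [qc, bc, cj_mul_left, cj_mul, qb, vb.cj_eq, cj_mul, cj_mul, rv.symm.cj_eq, cj_swap rq,
      mul_assoc, mul_assoc, mul_assoc, mul_right_inj, ← mul_assoc, uv.inv_left.eq, mul_assoc,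
      mul_right_inj] at h
    exact h.symm
  have vp : Commute v p := by
    have h := va.cj_map c
    rw [vc', ac] at h
    exact (h.symm.cancel_left (ua.mul_right up).symm.inv_right).symm.cancel_left va
  -- `[p, c] = y` conjugated by `d`
  have vc : Commute v c := by
    have h := cj_rel pc d
    have e : Commute (cj q p) v := by
      have := vp.cj_map q
      rw [vq.cj_eq] at this
      exact this.symm
    rw [cd, pd', yd.cj_eq, cj_mul_left, zc, cj_mul, cj_cj, qc, pc, cj_mul_left, cj_mul,
      qy.symm.cj_eq, cj_mul, e.cj_eq, vy.symm.cj_eq, mul_assoc, mul_assoc, mul_right_inj,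
      vy.eq, mul_right_inj] at h
    exact commute_iff_cj.2 h
  have u1 : u = 1 := by
    rw [vc.cj_eq] at vc'
    simpa using vc'
  have wd : Commute w d := by
    rw [commute_iff_cj, wd', u1, one_mul]
  -- `[r, c] = x` conjugated by `a`
  have xa : Commute x a := by
    have h := cj_rel rc a
    rw [ra, ca, cj_mul_left, cj_mul, rc, wc.cj_eq, cj_mul, cj_mul, pr.symm.inv_right.cj_eq,
      xp.inv_right.cj_eq, wp.inv_right.cj_eq, mul_assoc, mul_assoc, mul_right_inj, ← wx.eq,
      mul_right_inj] at h
    exact commute_iff_cj.2 h.symm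
  -- `[p, a] = z⁻¹` conjugated by `d`
  have pq : Commute p q := by
    have h := cj_rel pa d
    have e : cj a (cj q p) = cj q p * z⁻¹ := by
      rw [cj_cj, qa, pa, cj_mul_left, cj_mul q, cj_inv, cz, cj_mul, cj_inv, cz,
        xpq.symm.inv_right.cj_eq]
    rw [ad, pd', cj_inv, cz, cj_mul_left, cj_mul, e, va.cj_eq, cj_mul, cj_mul, cj_inv, cz,
      vq.cj_eq, mul_assoc, mul_assoc, ← (zi v).eq, mul_left_inj] at h
    exact commute_iff_cj.2 (cj_inj h)
  -- `[q, a] = x⁻¹` conjugated by `c`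
  have xc : Commute x c := by
    have h := cj_rel qa c
    rw [qc, ac, cj_mul_left, cj_mul, qa, va.cj_eq, cj_mul, cj_mul, cj_inv, cj_inv,
      pq.symm.cj_eq, xp.cj_eq, vp.cj_eq, mul_assoc, mul_assoc, mul_right_inj, xv.inv_left.eq,
      mul_right_inj, inv_inj] at h
    exact commute_iff_cj.2 h.symm
  refine ⟨?_, by rw [pd', pq.cj_eq], rd⟩
  simp only [List.mem_cons, List.not_mem_nil, or_false, forall_eq_or_imp, forall_eq]
  exact ⟨⟨xa, xb, xc, xd⟩, ⟨ya, yb, yc, yd⟩, ⟨wa, wb, wc, wd⟩, ⟨va, vb, vc, vd⟩⟩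

/-! ### The Malcev completion -/

/-- The class-three nilpotent Lie algebra over `ℚ` attached to `N34`, with coordinates in the basis
`a, b, c, d` (generators), `p = [a, c]`, `q = [a, d]`, `r = [b, c]`, `s = [b, d]`, and central
`x, y, z, w, v`. It is made into a group by the Baker–Campbell–Hausdorff product, so that an element
stands for its exponential. -/
@[ext]
structure Mal where
  (a b c d p q r s x y z w v : ℚ)

namespace Mal

/-- `Tx`, `Ty`, `Tz`, `Tw`, `Tv` are the central coordinates of the Lie bracket `[P, X]`, for `P` in
the span of `p, q, r, s` and `X` in the span of `a, b, c, d`; all other coordinates are ignored. -/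
def Tx (P X : Mal) : ℚ := P.r * X.c - P.q * X.a
/-- The `y` coordinate of `[P, X]`; see `Tx`. -/
def Ty (P X : Mal) : ℚ := P.p * X.c + P.r * X.d + P.s * X.c
/-- The `z` coordinate of `[P, X]`; see `Tx`. -/
def Tz (P X : Mal) : ℚ := -(P.p * X.a) - P.s * X.b
/-- The `w` coordinate of `[P, X]`; see `Tx`. -/
def Tw (P X : Mal) : ℚ := P.p * X.b + P.r * X.a + P.s * X.d
/-- The `v` coordinate of `[P, X]`; see `Tx`. -/
def Tv (P X : Mal) : ℚ := P.p * X.d + P.q * X.b + P.q * X.c + P.s * X.a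

/-- The Lie bracket; `[a, b] = y` and `[c, d] = z` lie in the centre. -/
def lie (X Y : Mal) : Mal where
  a := 0
  b := 0
  c := 0
  d := 0
  p := X.a * Y.c - X.c * Y.a
  q := X.a * Y.d - X.d * Y.a
  r := X.b * Y.c - X.c * Y.b
  s := X.b * Y.d - X.d * Y.b
  x := Tx X Y - Tx Y X
  y := Ty X Y - Ty Y X + (X.a * Y.b - X.b * Y.a)
  z := Tz X Y - Tz Y X + (X.c * Y.d - X.d * Y.c)
  w := Tw X Y - Tw Y X
  v := Tv X Y - Tv Y X

/-- The product of the Baker–Campbell–Hausdorff formula in class three,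
`X + Y + [X, Y] / 2 + ([X, [X, Y]] - [Y, [X, Y]]) / 12`. -/
def bch (X Y : Mal) : Mal where
  a := X.a + Y.a
  b := X.b + Y.b
  c := X.c + Y.c
  d := X.d + Y.d
  p := X.p + Y.p + (lie X Y).p / 2
  q := X.q + Y.q + (lie X Y).q / 2
  r := X.r + Y.r + (lie X Y).r / 2
  s := X.s + Y.s + (lie X Y).s / 2
  x := X.x + Y.x + (lie X Y).x / 2 + (Tx (lie X Y) Y - Tx (lie X Y) X) / 12
  y := X.y + Y.y + (lie X Y).y / 2 + (Ty (lie X Y) Y - Ty (lie X Y) X) / 12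
  z := X.z + Y.z + (lie X Y).z / 2 + (Tz (lie X Y) Y - Tz (lie X Y) X) / 12
  w := X.w + Y.w + (lie X Y).w / 2 + (Tw (lie X Y) Y - Tw (lie X Y) X) / 12
  v := X.v + Y.v + (lie X Y).v / 2 + (Tv (lie X Y) Y - Tv (lie X Y) X) / 12

instance : Mul Mal := ⟨bch⟩
instance : One Mal := ⟨⟨0, 0, 0, 0, 0, 0, 0, 0, 0, 0, 0, 0, 0⟩⟩
instance : Inv Mal :=
  ⟨fun X => ⟨-X.a, -X.b, -X.c, -X.d, -X.p, -X.q, -X.r, -X.s, -X.x, -X.y, -X.z, -X.w, -X.v⟩⟩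

theorem mul_def (X Y : Mal) : X * Y = bch X Y := rfl
theorem one_def : (1 : Mal) = ⟨0, 0, 0, 0, 0, 0, 0, 0, 0, 0, 0, 0, 0⟩ := rfl
theorem inv_def (X : Mal) : X⁻¹ =
  ⟨-X.a, -X.b, -X.c, -X.d, -X.p, -X.q, -X.r, -X.s, -X.x, -X.y, -X.z, -X.w, -X.v⟩ := rfl

instance : Group Mal := Group.ofLeftAxioms
  (by intro X Y Z; ext <;> simp only [mul_def, bch, lie, Tx, Ty, Tz, Tw, Tv] <;> ring)
  (by intro X; ext <;> simp only [mul_def, one_def, bch, lie, Tx, Ty, Tz, Tw, Tv] <;> ring)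
  (by intro X; ext <;> simp only [mul_def, one_def, inv_def, bch, lie, Tx, Ty, Tz, Tw, Tv] <;> ring)

theorem pow_eq (X : Mal) (n : ℕ) : X ^ n = ⟨n * X.a, n * X.b, n * X.c, n * X.d, n * X.p, n * X.q,
    n * X.r, n * X.s, n * X.x, n * X.y, n * X.z, n * X.w, n * X.v⟩ := by
  induction n with
  | zero => simp [one_def]
  | succ n ih =>
    rw [pow_succ, ih]
    ext <;> simp only [mul_def, bch, lie, Tx, Ty, Tz, Tw, Tv, Nat.cast_add, Nat.cast_one] <;> ring

/-- The group commutator is the exponential of `[X, Y] + [[X, Y], X + Y] / 2`, with Lie brackets. -/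
theorem cmt_eq (X Y : Mal) : cmt X Y =
    { lie X Y with
      x := (lie X Y).x + (Tx (lie X Y) X + Tx (lie X Y) Y) / 2
      y := (lie X Y).y + (Ty (lie X Y) X + Ty (lie X Y) Y) / 2
      z := (lie X Y).z + (Tz (lie X Y) X + Tz (lie X Y) Y) / 2
      w := (lie X Y).w + (Tw (lie X Y) X + Tw (lie X Y) Y) / 2
      v := (lie X Y).v + (Tv (lie X Y) X + Tv (lie X Y) Y) / 2 } := by
  ext <;> simp only [cmt, inv_def, mul_def, bch, lie, Tx, Ty, Tz, Tw, Tv] <;> ring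

/-- The central element with coordinates `x, y, z, w, v`. -/
def cen (x y z w v : ℚ) : Mal := ⟨0, 0, 0, 0, 0, 0, 0, 0, x, y, z, w, v⟩

theorem cen_mul (x y z w v x' y' z' w' v' : ℚ) : cen x y z w v * cen x' y' z' w' v' =
    cen (x + x') (y + y') (z + z') (w + w') (v + v') := by
  ext <;> simp only [cen, mul_def, bch, lie, Tx, Ty, Tz, Tw, Tv] <;> ring

theorem cmt_cmt_left (X Y Z : Mal) : cmt (cmt X Y) Z =
    cen (Tx (lie X Y) Z) (Ty (lie X Y) Z) (Tz (lie X Y) Z) (Tw (lie X Y) Z) (Tv (lie X Y) Z) := by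
  ext <;> simp only [cen, cmt_eq, lie, Tx, Ty, Tz, Tw, Tv] <;> ring

theorem cmt_cmt_right (X Y Z : Mal) : cmt Z (cmt X Y) =
    cen (-Tx (lie X Y) Z) (-Ty (lie X Y) Z) (-Tz (lie X Y) Z) (-Tw (lie X Y) Z)
      (-Tv (lie X Y) Z) := by
  ext <;> simp only [cen, cmt_eq, lie, Tx, Ty, Tz, Tw, Tv] <;> ring

end Mal

/-! ### The relations satisfied by the powers of the generators -/

/-- The defining relations of `N34`, with `[a, b]` and `[c, d]` replaced by their `n`-th powers in the
last two; `Rels 1` is the presentation, and `Rels n` holds for the `n`-th powers of the generators. -/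
structure Rels {G : Type*} [Group G] (n : ℕ) (a b c d : G) : Prop where
  aab : cmt a (cmt a b) = 1
  abb : cmt (cmt a b) b = 1
  acd : cmt a (cmt c d) = 1
  add : cmt (cmt a d) d = 1
  bbc : cmt b (cmt b c) = 1
  bcd : cmt b (cmt c d) = 1
  ccd : cmt c (cmt c d) = 1
  cdd : cmt (cmt c d) d = 1
  abc : cmt a (cmt b c) * cmt (cmt a c) b = 1
  abd : cmt a (cmt b d) * cmt (cmt a d) b = 1
  aad : cmt a (cmt a d) = cmt (cmt b c) c
  aac : cmt a (cmt a c) = cmt b (cmt b d)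
  acb : cmt (cmt a c) b = cmt (cmt b d) d
  acc : cmt (cmt a c) c = cmt (cmt b d) c
  adb : cmt (cmt a d) b = cmt (cmt a d) c
  ab : cmt a b ^ n = cmt (cmt a c) c
  cd : cmt c d ^ n = cmt a (cmt a c)

namespace Mal

/-- Two vectors of `ℚ⁴` whose wedge product is a combination of `a ∧ b` and `c ∧ d` are linearly
dependent, or span the plane `⟨a, b⟩`, or span the plane `⟨c, d⟩`. -/
theorem plane_cases {a b c d a₁ b₁ c₁ d₁ : ℚ} (hp : a * c₁ - c * a₁ = 0)
    (hq : a * d₁ - d * a₁ = 0) (hr : b * c₁ - c * b₁ = 0) (hs : b * d₁ - d * b₁ = 0) :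
    ((a = 0 ∧ b = 0 ∧ c = 0 ∧ d = 0) ∨ ∃ t, a₁ = t * a ∧ b₁ = t * b ∧ c₁ = t * c ∧ d₁ = t * d) ∨
    (c = 0 ∧ d = 0 ∧ c₁ = 0 ∧ d₁ = 0 ∧ a * b₁ - b * a₁ ≠ 0) ∨
    (a = 0 ∧ b = 0 ∧ a₁ = 0 ∧ b₁ = 0 ∧ c * d₁ - d * c₁ ≠ 0) := by
  by_cases h1 : a * b₁ - b * a₁ = 0
  · by_cases h2 : c * d₁ - d * c₁ = 0
    · left
      by_cases ha : a = 0
      · by_cases hb : b = 0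
        · by_cases hc : c = 0
          · by_cases hd : d = 0
            · exact Or.inl ⟨ha, hb, hc, hd⟩
            · right; refine ⟨d₁ / d, ?_, ?_, ?_, ?_⟩ <;> field_simp <;> linarith
          · right; refine ⟨c₁ / c, ?_, ?_, ?_, ?_⟩ <;> field_simp <;> linarith
        · right; refine ⟨b₁ / b, ?_, ?_, ?_, ?_⟩ <;> field_simp <;> linarith
      · right; refine ⟨a₁ / a, ?_, ?_, ?_, ?_⟩ <;> field_simp <;> linarith
    · right; right
      refine ⟨?_, ?_, ?_, ?_, h2⟩ <;> refine (mul_eq_zero.1 ?_).resolve_right h2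
      · linear_combination -d * hp + c * hq
      · linear_combination -d * hr + c * hs
      · linear_combination -d₁ * hp + c₁ * hq
      · linear_combination -d₁ * hr + c₁ * hs
  · right; left
    refine ⟨?_, ?_, ?_, ?_, h1⟩ <;> refine (mul_eq_zero.1 ?_).resolve_right h1
    · linear_combination b * hp - a * hr
    · linear_combination b * hq - a * hs
    · linear_combination b₁ * hp - a₁ * hr
    · linear_combination b₁ * hq - a₁ * hs

/-- A solution of `Rels n` in `Mal` has `[A, [A, C]]` trivial or equal to its value at
`n` times the basis vectors `a, b, c, d`. -/
theorem key {n : ℕ} (hn : n ≠ 0) {A B C D : Mal} (h : Rels n A B C D) :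
    cmt A (cmt A C) = 1 ∨ cmt A (cmt A C) = cen 0 0 ((n : ℚ) ^ 3) 0 0 := by
  have hn' : (n : ℚ) ≠ 0 := Nat.cast_ne_zero.2 hn
  obtain ⟨-, -, -, add, bbc, -, -, -, -, -, aad, aac, acb, acc, adb, ab, cd⟩ := h
  rw [pow_eq] at ab cd
  simp only [cmt_cmt_left, cmt_cmt_right, cen, one_def, Mal.mk.injEq, true_and, neg_eq_zero, neg_inj]
    at add bbc aad aac acb acc adb ab cd ⊢
  simp only [cmt_eq, mul_eq_zero, hn', false_or] at ab cd
  obtain ⟨-, -, -, -, ABp, ABq, ABr, ABs, -, ABy, -⟩ := ab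
  obtain ⟨-, -, -, -, CDp, CDq, CDr, CDs, -⟩ := cd
  -- first, `C, D` linearly dependent modulo the derived subalgebra
  rcases plane_cases CDp CDq CDr CDs with (⟨k1, k2, k3, k4⟩ | ⟨t, k1, k2, k3, k4⟩) | hCD
  · left
    simp [Tx, Ty, Tz, Tw, Tv, k1, k2, k3, k4, lie]
  · left
    by_cases ht : t = 0
    · subst ht
      simp only [zero_mul] at k1 k2 k3 k4
      simpa [Tx, Ty, Tz, Tw, Tv, k1, k2, k3, k4, lie] using aac
    · -- `[A, D, D] = 0` kills `[A, C, C]`, hence `[B, D, C]`, `[B, C, C]`, `[A, D, A]`, `[A, C, A]`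
      simp only [Tx, Ty, Tz, Tw, Tv, k1, k2, k3, k4, lie] at add aad acc ⊢
      obtain ⟨e1, e2, e3, e4, e5⟩ := add
      obtain ⟨f1, f2, f3, f4, f5⟩ := acc
      obtain ⟨g1, g2, g3, g4, g5⟩ := aad
      have ht4 : t ^ 4 ≠ 0 := pow_ne_zero 4 ht
      refine ⟨?_, ?_, ?_, ?_, ?_⟩ <;> apply mul_left_cancel₀ ht4
      · linear_combination -t ^ 3 * g1 + t ^ 2 * f1 - e1
      · linear_combination -t ^ 3 * g2 + t ^ 2 * f2 - e2
      · linear_combination -t ^ 3 * g3 + t ^ 2 * f3 - e3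
      · linear_combination -t ^ 3 * g4 + t ^ 2 * f4 - e4
      · linear_combination -t ^ 3 * g5 + t ^ 2 * f5 - e5
  -- `A, B` linearly dependent: `[B, [B, C]] = 0` kills `[A, [A, C]]` if `B ≠ 0`, and
  -- `[A, [A, C]] = [B, [B, D]]` does if `B = 0`
  rcases plane_cases ABp ABq ABr ABs with (⟨h1, h2, h3, h4⟩ | ⟨t, h1, h2, h3, h4⟩) |
    ⟨h1, h2, h3, h4, hAB⟩ | ⟨h1, h2, h3, h4, hAB⟩
  · left
    simp [Tx, Ty, Tz, Tw, Tv, h1, h2, h3, h4, lie]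
  · left
    by_cases ht : t = 0
    · subst ht
      simp only [zero_mul] at h1 h2 h3 h4
      simpa [Tx, Ty, Tz, Tw, Tv, h1, h2, h3, h4, lie] using aac
    · have ht2 : t ^ 2 ≠ 0 := pow_ne_zero 2 ht
      simp only [Tx, Ty, Tz, Tw, Tv, h1, h2, h3, h4, lie] at bbc ⊢
      obtain ⟨e1, e2, e3, e4, e5⟩ := bbc
      refine ⟨?_, ?_, ?_, ?_, ?_⟩ <;> apply mul_left_cancel₀ ht2
      · linear_combination e1
      · linear_combination e2
      · linear_combination e3
      · linear_combination e4
      · linear_combination e5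
  · -- `A, B` span `⟨a, b⟩`
    rcases hCD with ⟨k1, k2, k3, k4, hCD⟩ | ⟨k1, k2, k3, k4, hCD⟩
    · left
      simp [Tx, Ty, Tz, Tw, Tv, h1, h2, k1, k2, lie]
    · right
      simp only [Tx, Ty, Tz, Tw, Tv, h1, h2, h3, h4, k1, k2, k3, k4, lie, mul_zero, zero_mul,
        sub_zero, add_zero, zero_add, zero_sub, zero_div]
        at add bbc aac acc adb ABy hAB hCD ⊢
      obtain ⟨bx, -, bz, -, -⟩ := bbc
      obtain ⟨-, dy, -, dw, -⟩ := add
      have Ba : B.a = 0 := by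
        by_contra h
        have e1 : C.d = 0 := by grind
        have e2 : C.c = 0 := by grind
        simp [e1, e2] at hCD
      have Bb : B.b ≠ 0 := by rintro h; simp [Ba, h] at hAB
      have Cd : C.d = 0 := by grind
      have Cc : C.c ≠ 0 := by rintro h; simp [Cd, h] at hCD
      have Dd : D.d ≠ 0 := by rintro h; simp [Cd, h] at hCD
      have Aa : A.a ≠ 0 := by rintro h; simp [Ba, h] at hAB
      have Ab : A.b = 0 := by grind
      have Dc : D.c = 0 := by grind
      -- `A, B, C, D` are multiples of `a, b, c, d`; all factors are equal to `n`
      simp only [Ba, Cd, Ab, Dc, mul_zero, zero_mul, add_zero, zero_add, sub_zero, neg_zero, neg_neg,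
        neg_inj, zero_sub, true_and, and_true] at aac acc adb ABy ⊢
      have e1 : A.a * C.c = B.b * D.d := mul_right_cancel₀ Cc acc
      have e2 : A.a = B.b := mul_left_cancel₀ (mul_ne_zero Bb Dd) (by
        linear_combination aac - A.a * e1)
      have e3 : B.b = C.c := mul_left_cancel₀ (mul_ne_zero Aa Dd) adb
      rw [← e3, e2] at ABy ⊢
      have e4 : (n : ℚ) = B.b := mul_right_cancel₀ (mul_ne_zero Bb Bb) (by linear_combination ABy)
      rw [e4]; ring
  · -- `A, B` span `⟨c, d⟩`
    rcases hCD with ⟨k1, k2, k3, k4, hCD⟩ | ⟨k1, k2, k3, k4, hCD⟩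
    · exfalso
      simp only [Tx, Ty, Tz, Tw, Tv, h1, h2, h3, h4, k1, k2, k3, k4, lie, mul_zero, zero_mul,
        sub_zero, add_zero, zero_add, zero_sub] at bbc adb hAB hCD
      -- `B` is a multiple of `d`, so `[[A, D], B] = [[A, D], C]` has different coordinates at `y`
      obtain ⟨bx, hy, -, bw, -⟩ := bbc
      obtain ⟨-, ay, -⟩ := adb
      have Cb : C.b = 0 := by
        by_contra h
        have e1 : B.c = 0 := by grind
        have e2 : B.d = 0 := by grind
        simp [e1, e2] at hAB
      have Ca : C.a ≠ 0 := by rintro h; simp [Cb, h] at hCD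
      have Bc : B.c = 0 := by grind
      have Ac : A.c ≠ 0 := by rintro h; simp [Bc, h] at hAB
      have Bd : B.d ≠ 0 := by rintro h; simp [Bc, h] at hAB
      have Db : D.b ≠ 0 := by rintro h; simp [Cb, h] at hCD
      simp [Bc, Ac, Bd, Db] at ay
    · left
      simp [Tx, Ty, Tz, Tw, Tv, h1, h2, k1, k2, lie]
end Mal

theorem map_cmt {G K : Type*} [Group G] [Group K] (f : G →* K) (g h : G) :
    f (cmt g h) = cmt (f g) (f h) := by simp [cmt]

theorem cmt_eq_one_iff {G : Type*} [Group G] {g h : G} : cmt g h = 1 ↔ Commute g h := by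
  rw [cmt, mul_assoc, ← mul_inv_rev, inv_mul_eq_one]
  exact eq_comm

theorem cj_eq_mul_cmt {G : Type*} [Group G] (g u : G) : cj g u = u * cmt u g := by
  simp [cj, cmt, mul_assoc]

theorem cmt_inv {G : Type*} [Group G] (g h : G) : (cmt g h)⁻¹ = cmt h g := by
  simp [cmt, mul_assoc]

namespace Rels
variable {G K : Type*} [Group G] [Group K] {n : ℕ} {a b c d : G}

theorem of_injective {f : G →* K} (hf : Function.Injective f)
    (h : Rels n (f a) (f b) (f c) (f d)) : Rels n a b c d := by
  obtain ⟨h1, h2, h3, h4, h5, h6, h7, h8, h9, h10, h11, h12, h13, h14, h15, h16, h17⟩ := h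
  constructor <;> apply hf <;> simp only [map_cmt, map_mul, map_pow, map_one] <;> assumption

theorem map (f : G →* K) (h : Rels n a b c d) : Rels n (f a) (f b) (f c) (f d) := by
  obtain ⟨h1, h2, h3, h4, h5, h6, h7, h8, h9, h10, h11, h12, h13, h14, h15, h16, h17⟩ := h
  constructor <;> simp only [← map_cmt, ← map_mul, ← map_pow] <;>
    first
    | simp only [h9, map_one]
    | simp only [h10, map_one]
    | simp only [h1, h2, h3, h4, h5, h6, h7, h8, h11, h12, h13, h14, h15, h16, h17, map_one]

end Rels

/-! ### Generators and relations of the group -/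

namespace N34

theorem forall_relators {K : Type*} [Group K] (φ : FreeGroup (Fin 4) →* K) :
    (∀ r ∈ N34Rels, φ r = 1) ↔
      Rels 1 (φ (.of 0)) (φ (.of 1)) (φ (.of 2)) (φ (.of 3)) := by
  simp only [N34Rels, Set.mem_insert_iff, Set.mem_singleton_iff, forall_eq_or_imp, forall_eq,
    map_mul, map_inv, map_cmt, mul_inv_eq_one]
  constructor
  · rintro ⟨h1, h2, h3, h4, h5, h6, h7, h8, h9, h10, h11, h12, h13, h14, h15, h16, h17⟩
    constructor <;> (try rw [pow_one]) <;> assumption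
  · rintro ⟨h1, h2, h3, h4, h5, h6, h7, h8, h9, h10, h11, h12, h13, h14, h15, h16, h17⟩
    rw [pow_one] at h16 h17
    exact ⟨h1, h2, h3, h4, h5, h6, h7, h8, h9, h10, h11, h12, h13, h14, h15, h16, h17⟩

theorem rels : Rels 1 ga gb gc gd :=
  (forall_relators (PresentedGroup.mk N34Rels)).1 fun _ => PresentedGroup.one_of_mem

/-- An element commuting with the images of the four generators commutes with the whole image. -/
theorem commute_of_gen {K : Type*} [Group K] (φ : N34 →* K) {t : K} (ha : Commute t (φ ga))
    (hb : Commute t (φ gb)) (hc : Commute t (φ gc)) (hd : Commute t (φ gd)) (g : N34) :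
    Commute t (φ g) := by
  have : (⊤ : Subgroup N34) ≤ (Subgroup.centralizer {t}).comap φ := by
    rw [← PresentedGroup.closure_range_of, Subgroup.closure_le]
    rintro _ ⟨i, rfl⟩
    simp only [Subgroup.coe_comap, Set.mem_preimage, SetLike.mem_coe,
      Subgroup.mem_centralizer_singleton_iff]
    fin_cases i
    exacts [ha.symm, hb.symm, hc.symm, hd.symm]
  have := this (Subgroup.mem_top g)
  rw [Subgroup.mem_comap, Subgroup.mem_centralizer_singleton_iff] at this
  exact Commute.symm this

theorem z_central (g : N34) : Commute (cmt gc gd) g := by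
  obtain ⟨-, -, h3, -, -, h6, h7, h8, -⟩ := rels
  simp only [cmt_eq_one_iff] at h3 h6 h7 h8
  exact commute_of_gen (MonoidHom.id _) h3.symm h6.symm h7.symm h8 g

/-- `class_three` applied in `N34`: the elements `x, y, w, v` are central, `[p, d] = v` and
`[r, d] = y`. -/
theorem xywv_central :
    (∀ g : N34, Commute (cmt ga (cmt ga gd)) g ∧ Commute (cmt ga gb) g ∧
      Commute (cmt (cmt ga gc) gb) g ∧ Commute (cmt (cmt ga gd) gb) g) ∧
    cmt (cmt ga gc) gd = cmt (cmt ga gd) gb ∧ cmt (cmt gb gc) gd = cmt ga gb := by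
  obtain ⟨h1, h2, h3, h4, h5, h6, h7, h8, h9, h10, h11, h12, h13, h14, h15, h16, h17⟩ := rels
  rw [pow_one] at h16 h17
  rw [cmt_eq_one_iff] at h1 h2 h4 h5
  rw [mul_eq_one_iff_inv_eq, cmt_inv] at h9 h10
  obtain ⟨H, e1, e2⟩ := class_three (cj_eq_mul_cmt gc ga) (cj_eq_mul_cmt gd ga)
    (cj_eq_mul_cmt gc gb) (cj_eq_mul_cmt gd gb) (cj_eq_mul_cmt gb ga) (cj_eq_mul_cmt gd gc)
    h1.symm h2 z_central (by rw [cj_eq_mul_cmt, h17, cmt_inv]) (cj_eq_mul_cmt _ _)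
    (by rw [cj_eq_mul_cmt, h16]) (by rw [cj_eq_mul_cmt, cmt_inv])
    (cj_eq_mul_cmt _ _) (by rw [cj_eq_mul_cmt, h15]) h4
    (by rw [cj_eq_mul_cmt, h9]) h5.symm (by rw [cj_eq_mul_cmt, h11])
    (by rw [cj_eq_mul_cmt, h10]) (by rw [cj_eq_mul_cmt, h17, h12, cmt_inv])
    (by rw [cj_eq_mul_cmt, h16, h14]) (by rw [cj_eq_mul_cmt, h13])
  rw [cj_eq_mul_cmt, mul_right_inj] at e1 e2
  simp only [List.mem_cons, List.not_mem_nil, or_false, forall_eq_or_imp, forall_eq] at H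
  obtain ⟨⟨a1, b1, c1, d1⟩, ⟨a2, b2, c2, d2⟩, ⟨a3, b3, c3, d3⟩, a4, b4, c4, d4⟩ := H
  exact ⟨fun g => ⟨commute_of_gen (MonoidHom.id _) a1 b1 c1 d1 g,
    commute_of_gen (MonoidHom.id _) a2 b2 c2 d2 g, commute_of_gen (MonoidHom.id _) a3 b3 c3 d3 g,
    commute_of_gen (MonoidHom.id _) a4 b4 c4 d4 g⟩, e1, e2⟩

end N34

namespace Mal

theorem cen_pow (x y z w v : ℚ) (n : ℕ) :
    cen x y z w v ^ n = cen (n * x) (n * y) (n * z) (n * w) (n * v) := by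
  simp [cen, pow_eq]

theorem cen_zpow (x y z w v : ℚ) (n : ℤ) :
    cen x y z w v ^ n = cen (n * x) (n * y) (n * z) (n * w) (n * v) := by
  cases n with
  | ofNat n => simp [cen_pow]
  | negSucc n =>
    rw [zpow_negSucc, cen_pow, inv_def]
    simp only [cen, Int.cast_negSucc, Mal.mk.injEq, neg_zero, true_and]
    refine ⟨?_, ?_, ?_, ?_, ?_⟩ <;> ring

/-- The multiples by `n` of the basis vectors `a, b, c, d` satisfy `Rels n`. -/
theorem rels_basis (n : ℕ) : Rels n (⟨n, 0, 0, 0, 0, 0, 0, 0, 0, 0, 0, 0, 0⟩ : Mal)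
    ⟨0, n, 0, 0, 0, 0, 0, 0, 0, 0, 0, 0, 0⟩ ⟨0, 0, n, 0, 0, 0, 0, 0, 0, 0, 0, 0, 0⟩
    ⟨0, 0, 0, n, 0, 0, 0, 0, 0, 0, 0, 0, 0⟩ := by
  constructor <;> simp only [cmt_cmt_left, cmt_cmt_right, pow_eq, cen_mul] <;>
    (try simp only [cmt_eq]) <;>
    simp [cen, one_def, lie, Tx, Ty, Tz, Tw, Tv, mul_assoc]

end Mal

/-! ### The map to the Malcev completion and its injectivity on triple commutators -/

namespace N34

/-- The homomorphism from `N34` to its Malcev completion taking generators to basis vectors. -/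
def toMal : N34 →* Mal :=
  PresentedGroup.toGroup (rels := N34Rels)
    (f := ![⟨1, 0, 0, 0, 0, 0, 0, 0, 0, 0, 0, 0, 0⟩, ⟨0, 1, 0, 0, 0, 0, 0, 0, 0, 0, 0, 0, 0⟩,
      ⟨0, 0, 1, 0, 0, 0, 0, 0, 0, 0, 0, 0, 0⟩, ⟨0, 0, 0, 1, 0, 0, 0, 0, 0, 0, 0, 0, 0⟩])
    ((forall_relators _).2 (by simpa [FreeGroup.lift_apply_of] using Mal.rels_basis 1))

theorem toMal_a : toMal ga = ⟨1, 0, 0, 0, 0, 0, 0, 0, 0, 0, 0, 0, 0⟩ := PresentedGroup.toGroup.of _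
theorem toMal_b : toMal gb = ⟨0, 1, 0, 0, 0, 0, 0, 0, 0, 0, 0, 0, 0⟩ := PresentedGroup.toGroup.of _
theorem toMal_c : toMal gc = ⟨0, 0, 1, 0, 0, 0, 0, 0, 0, 0, 0, 0, 0⟩ := PresentedGroup.toGroup.of _
theorem toMal_d : toMal gd = ⟨0, 0, 0, 1, 0, 0, 0, 0, 0, 0, 0, 0, 0⟩ := PresentedGroup.toGroup.of _

/-- The central element `x = [a, [a, d]]`. -/
def gx : Subgroup.center N34 :=
  ⟨cmt ga (cmt ga gd), Subgroup.mem_center_iff.2 fun g => (xywv_central.1 g).1.symm⟩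
/-- The central element `y = [a, b]`. -/
def gy : Subgroup.center N34 :=
  ⟨cmt ga gb, Subgroup.mem_center_iff.2 fun g => (xywv_central.1 g).2.1.symm⟩
/-- The central element `z = [c, d]`. -/
def gz : Subgroup.center N34 :=
  ⟨cmt gc gd, Subgroup.mem_center_iff.2 fun g => (z_central g).symm⟩
/-- The central element `w = [[a, c], b]`. -/
def gw : Subgroup.center N34 :=
  ⟨cmt (cmt ga gc) gb, Subgroup.mem_center_iff.2 fun g => (xywv_central.1 g).2.2.1.symm⟩
/-- The central element `v = [[a, d], b]`. -/
def gv : Subgroup.center N34 :=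
  ⟨cmt (cmt ga gd) gb, Subgroup.mem_center_iff.2 fun g => (xywv_central.1 g).2.2.2.symm⟩

theorem toMal_x : toMal gx = Mal.cen 1 0 0 0 0 := by
  rw [gx, map_cmt, map_cmt, toMal_a, toMal_d, Mal.cmt_cmt_right]
  simp [Mal.cen, Mal.lie, Mal.Tx, Mal.Ty, Mal.Tz, Mal.Tw, Mal.Tv]

theorem toMal_y : toMal gy = Mal.cen 0 1 0 0 0 := by
  rw [gy, map_cmt, toMal_a, toMal_b, Mal.cmt_eq]
  simp [Mal.cen, Mal.lie, Mal.Tx, Mal.Ty, Mal.Tz, Mal.Tw, Mal.Tv]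

theorem toMal_z : toMal gz = Mal.cen 0 0 1 0 0 := by
  rw [gz, map_cmt, toMal_c, toMal_d, Mal.cmt_eq]
  simp [Mal.cen, Mal.lie, Mal.Tx, Mal.Ty, Mal.Tz, Mal.Tw, Mal.Tv]

theorem toMal_w : toMal gw = Mal.cen 0 0 0 1 0 := by
  rw [gw, map_cmt, map_cmt, toMal_a, toMal_b, toMal_c, Mal.cmt_cmt_left]
  simp [Mal.cen, Mal.lie, Mal.Tx, Mal.Ty, Mal.Tz, Mal.Tw, Mal.Tv]

theorem toMal_v : toMal gv = Mal.cen 0 0 0 0 1 := by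
  rw [gv, map_cmt, map_cmt, toMal_a, toMal_b, toMal_d, Mal.cmt_cmt_left]
  simp [Mal.cen, Mal.lie, Mal.Tx, Mal.Ty, Mal.Tz, Mal.Tw, Mal.Tv]

/-- The central subgroup generated by `x, y, z, w, v`; it contains all triple commutators. -/
def S : Subgroup N34 :=
  (Subgroup.closure {gx, gy, gz, gw, gv}).map (Subgroup.center N34).subtype

theorem mem_S {t : Subgroup.center N34} (ht : t ∈ ({gx, gy, gz, gw, gv} : Set _)) : (t : N34) ∈ S :=
  ⟨t, Subgroup.subset_closure ht, rfl⟩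

theorem x_mem : cmt ga (cmt ga gd) ∈ S := mem_S (t := gx) (by simp)
theorem y_mem : cmt ga gb ∈ S := mem_S (t := gy) (by simp)
theorem z_mem : cmt gc gd ∈ S := mem_S (t := gz) (by simp)
theorem w_mem : cmt (cmt ga gc) gb ∈ S := mem_S (t := gw) (by simp)
theorem v_mem : cmt (cmt ga gd) gb ∈ S := mem_S (t := gv) (by simp)

theorem S_central {t : N34} (ht : t ∈ S) (g : N34) : Commute t g := by
  obtain ⟨t, -, rfl⟩ := ht
  exact (Subgroup.mem_center_iff.1 t.2 g).symm

instance : S.Normal :=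
  ⟨fun t ht g => by rwa [← (S_central ht g).eq, mul_inv_cancel_right]⟩

theorem S_normal_form {t : Subgroup.center N34} (ht : t ∈ Subgroup.closure {gx, gy, gz, gw, gv}) :
    ∃ i j k l m : ℤ, t = gx ^ i * gy ^ j * gz ^ k * gw ^ l * gv ^ m := by
  induction ht using Subgroup.closure_induction with
  | mem t ht =>
    simp only [Set.mem_insert_iff, Set.mem_singleton_iff] at ht
    rcases ht with rfl | rfl | rfl | rfl | rfl
    · exact ⟨1, 0, 0, 0, 0, by simp⟩
    · exact ⟨0, 1, 0, 0, 0, by simp⟩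
    · exact ⟨0, 0, 1, 0, 0, by simp⟩
    · exact ⟨0, 0, 0, 1, 0, by simp⟩
    · exact ⟨0, 0, 0, 0, 1, by simp⟩
  | one => exact ⟨0, 0, 0, 0, 0, by simp⟩
  | mul t t' _ _ h h' =>
    obtain ⟨i, j, k, l, m, rfl⟩ := h
    obtain ⟨i', j', k', l', m', rfl⟩ := h'
    exact ⟨i + i', j + j', k + k', l + l', m + m', by simp only [zpow_add]; ac_rfl⟩
  | inv t _ h =>
    obtain ⟨i, j, k, l, m, rfl⟩ := h
    exact ⟨-i, -j, -k, -l, -m, by simp only [zpow_neg, mul_inv_rev]; ac_rfl⟩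

theorem toMal_injOn {t u : N34} (ht : t ∈ S) (hu : u ∈ S) (h : toMal t = toMal u) : t = u := by
  suffices ∀ t ∈ S, toMal t = 1 → t = 1 by
    rw [← mul_inv_eq_one]
    exact this _ (S.mul_mem ht (S.inv_mem hu)) (by rw [map_mul, map_inv, h, mul_inv_cancel])
  rintro _ ⟨t, ht, rfl⟩ h
  obtain ⟨i, j, k, l, m, rfl⟩ := S_normal_form ht
  simp only [Subgroup.subtype_apply, map_mul, map_zpow,
    toMal_x, toMal_y, toMal_z, toMal_w, toMal_v, Mal.cen_zpow, Mal.cen_mul] at h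
  simp only [Mal.cen, Mal.one_def, mul_zero, mul_one, add_zero, zero_add, Mal.mk.injEq, true_and,
    Int.cast_eq_zero] at h
  obtain ⟨rfl, rfl, rfl, rfl, rfl⟩ := h
  simp

theorem commute_mk_iff (T : Subgroup N34) [T.Normal] {g h : N34} :
    Commute (QuotientGroup.mk' T g) (QuotientGroup.mk' T h) ↔ cmt g h ∈ T := by
  rw [← cmt_eq_one_iff, ← map_cmt, ← MonoidHom.mem_ker, QuotientGroup.ker_mk']

/-- The preimage of the centre of `N34 ⧸ S`; it contains all commutators. -/
def T : Subgroup N34 := (Subgroup.center (N34 ⧸ S)).comap (QuotientGroup.mk' S)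

instance : T.Normal := inferInstanceAs (Subgroup.comap _ _).Normal

theorem mem_T_of_gen {g : N34} (ha : cmt g ga ∈ S) (hb : cmt g gb ∈ S) (hc : cmt g gc ∈ S)
    (hd : cmt g gd ∈ S) : g ∈ T := by
  rw [← commute_mk_iff] at ha hb hc hd
  refine Subgroup.mem_center_iff.2 fun k => ?_
  obtain ⟨k, rfl⟩ := QuotientGroup.mk'_surjective S k
  exact (commute_of_gen _ ha hb hc hd k).symm

theorem cmt_mem_S_of_mem_T {g : N34} (hg : g ∈ T) (k : N34) : cmt g k ∈ S :=
  (commute_mk_iff S).1 (Subgroup.mem_center_iff.1 hg (QuotientGroup.mk' S k)).symm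

theorem S_le_T : S ≤ T := fun t ht => by
  have (g : N34) : cmt t g ∈ S := by
    rw [cmt_eq_one_iff.2 (S_central ht g)]
    exact S.one_mem
  exact mem_T_of_gen (this _) (this _) (this _) (this _)

theorem cmt_mem_T (g h : N34) : cmt g h ∈ T := by
  obtain ⟨h1, h2, h3, h4, h5, h6, h7, h8, h9, h10, h11, h12, h13, h14, h15, h16, h17⟩ := rels
  rw [pow_one] at h16 h17
  rw [mul_eq_one_iff_inv_eq, cmt_inv] at h9 h10
  obtain ⟨-, e1, e2⟩ := xywv_central
  have inv_mem {g h : N34} (H : cmt g h ∈ S) : cmt h g ∈ S := cmt_inv g h ▸ S.inv_mem H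
  have one_mem {t : N34} (H : t = 1) : t ∈ S := H ▸ S.one_mem
  have hp : cmt ga gc ∈ T := mem_T_of_gen (inv_mem (h17 ▸ z_mem)) w_mem (h16 ▸ y_mem) (e1 ▸ v_mem)
  have hq : cmt ga gd ∈ T := mem_T_of_gen (inv_mem x_mem) v_mem (h15 ▸ v_mem) (one_mem h4)
  have hr : cmt gb gc ∈ T :=
    mem_T_of_gen (h9 ▸ w_mem) (inv_mem (one_mem h5)) (h11 ▸ x_mem) (e2 ▸ y_mem)
  have hs : cmt gb gd ∈ T := mem_T_of_gen (h10 ▸ v_mem) (inv_mem (h12 ▸ h17 ▸ z_mem))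
    (h14 ▸ h16 ▸ y_mem) (h13 ▸ w_mem)
  have hy := S_le_T y_mem
  have hz := S_le_T z_mem
  rw [← commute_mk_iff] at hp hq hr hs hy hz ⊢
  refine commute_of_gen _ ?_ ?_ ?_ ?_ h <;> refine (commute_of_gen _ ?_ ?_ ?_ ?_ g).symm
  exacts [.refl _, hy, hp, hq, hy.symm, .refl _, hr, hs, hp.symm, hr.symm, .refl _, hz,
    hq.symm, hs.symm, hz.symm, .refl _]

theorem cmt_cmt_mem (g h k : N34) : cmt (cmt g h) k ∈ S := cmt_mem_S_of_mem_T (cmt_mem_T g h) k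

theorem cmt_cmt_mem' (g h k : N34) : cmt k (cmt g h) ∈ S := by
  rw [← cmt_inv]
  exact S.inv_mem (cmt_cmt_mem g h k)

theorem cmt_pow_pow_mem {g h : N34} (H : cmt g h ∈ S) (n : ℕ) : cmt (g ^ n) (h ^ n) ∈ S := by
  rw [← commute_mk_iff, map_pow, map_pow]
  exact ((commute_mk_iff S).2 H).pow_pow n n

/-- Both sides of every relation of `Rels n` lie in `S` once `[a, b]` and `[c, d]` do, so that the
relations may be checked in `Mal`. -/
theorem rels_of_toMal {n : ℕ} {a b c d : N34} (hab : cmt a b ∈ S) (hcd : cmt c d ∈ S)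
    (H : Rels n (toMal a) (toMal b) (toMal c) (toMal d)) : Rels n a b c d := by
  obtain ⟨h1, h2, h3, h4, h5, h6, h7, h8, h9, h10, h11, h12, h13, h14, h15, h16, h17⟩ := H
  refine ⟨toMal_injOn (cmt_cmt_mem' _ _ _) S.one_mem ?_,
    toMal_injOn (cmt_cmt_mem _ _ _) S.one_mem ?_,
    toMal_injOn (cmt_cmt_mem' _ _ _) S.one_mem ?_,
    toMal_injOn (cmt_cmt_mem _ _ _) S.one_mem ?_,
    toMal_injOn (cmt_cmt_mem' _ _ _) S.one_mem ?_,
    toMal_injOn (cmt_cmt_mem' _ _ _) S.one_mem ?_,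
    toMal_injOn (cmt_cmt_mem' _ _ _) S.one_mem ?_,
    toMal_injOn (cmt_cmt_mem _ _ _) S.one_mem ?_,
    toMal_injOn (S.mul_mem (cmt_cmt_mem' _ _ _) (cmt_cmt_mem _ _ _)) S.one_mem ?_,
    toMal_injOn (S.mul_mem (cmt_cmt_mem' _ _ _) (cmt_cmt_mem _ _ _)) S.one_mem ?_,
    toMal_injOn (cmt_cmt_mem' _ _ _) (cmt_cmt_mem _ _ _) ?_,
    toMal_injOn (cmt_cmt_mem' _ _ _) (cmt_cmt_mem' _ _ _) ?_,
    toMal_injOn (cmt_cmt_mem _ _ _) (cmt_cmt_mem _ _ _) ?_,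
    toMal_injOn (cmt_cmt_mem _ _ _) (cmt_cmt_mem _ _ _) ?_,
    toMal_injOn (cmt_cmt_mem _ _ _) (cmt_cmt_mem _ _ _) ?_,
    toMal_injOn (S.pow_mem hab n) (cmt_cmt_mem _ _ _) ?_,
    toMal_injOn (S.pow_mem hcd n) (cmt_cmt_mem' _ _ _) ?_⟩ <;>
    simp only [map_cmt, map_mul, map_pow, map_one] <;> assumption

theorem rels_pow (n : ℕ) : Rels n (ga ^ n) (gb ^ n) (gc ^ n) (gd ^ n) := by
  apply rels_of_toMal (cmt_pow_pow_mem y_mem n) (cmt_pow_pow_mem z_mem n)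
  simpa [toMal_a, toMal_b, toMal_c, toMal_d, Mal.pow_eq] using Mal.rels_basis n

theorem cmt_pow (n : ℕ) : cmt (ga ^ n) (cmt (ga ^ n) (gc ^ n)) = gz ^ (n ^ 3) := by
  refine toMal_injOn (cmt_cmt_mem' _ _ _) (S.pow_mem (mem_S (by simp)) _) ?_
  rw [map_cmt, map_cmt, map_pow, map_pow, map_pow, toMal_a, toMal_c, toMal_z, Mal.cen_pow,
    Mal.cmt_cmt_right]
  simp [Mal.cen, Mal.pow_eq, Mal.lie, Mal.Tx, Mal.Ty, Mal.Tz, Mal.Tw, Mal.Tv]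
  ring

end N34

/-- For every finite family of finite-index subgroups `H i` of `N_{3,4}` and homomorphisms
`f i : H i → N_{3,4}`, there is a nontrivial subgroup `N` of `⋂ i, H i`, normal in
`N_{3,4}`, with `f i (N) ≤ N` for all `i`. Consequently (a nontrivial `F`-core always
exists), `N_{3,4}` admits no faithful state-closed representation on any regular rooted
tree, transitive or not. -/
theorem N34_no_trivial_core (s : ℕ) (H : Fin s → Subgroup N34)
    (hH : ∀ i, (H i).FiniteIndex)
    (f : (i : Fin s) → (↥(H i) →* N34)) :
    ∃ N : Subgroup N34, N ≠ ⊥ ∧ N ≤ ⨅ i, H i ∧ N.Normal ∧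
      ∀ i, Subgroup.map (f i) (N.subgroupOf (H i)) ≤ N := by
  have hfin : (⨅ i, H i).FiniteIndex := Subgroup.finiteIndex_iInf hH
  set n := (⨅ i, H i).normalCore.index with hn_def
  have hn : n ≠ 0 := Subgroup.FiniteIndex.index_ne_zero
  have hpow (g : N34) : g ^ n ∈ ⨅ i, H i :=
    Subgroup.normalCore_le _ (Subgroup.pow_index_mem _ g)
  have hz : (N34.gz : N34) ^ (n ^ 3) ∈ ⨅ i, H i := by
    rw [pow_succ, pow_mul]
    exact hpow _
  have hzS : (N34.gz : N34) ^ (n ^ 3) ∈ N34.S := N34.S.pow_mem (N34.mem_S (by simp)) _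
  have hzM : N34.toMal ((N34.gz : N34) ^ (n ^ 3)) = Mal.cen 0 0 ((n : ℚ) ^ 3) 0 0 := by
    rw [map_pow, N34.toMal_z, Mal.cen_pow]
    simp
  refine ⟨Subgroup.zpowers ((N34.gz : N34) ^ (n ^ 3)), ?_, ?_, ?_, ?_⟩
  · rw [Ne, Subgroup.zpowers_eq_bot]
    intro h
    rw [h, map_one] at hzM
    simp [Mal.cen, Mal.one_def, hn, eq_comm (a := (0 : ℚ))] at hzM
  · rwa [Subgroup.zpowers_le]
  · refine ⟨fun t ht g => ?_⟩
    have htS := (Subgroup.zpowers_le.2 hzS) ht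
    rwa [← (N34.S_central htS g).eq, mul_inv_cancel_right]
  · intro i
    have hi (g : N34) : g ^ n ∈ H i := Subgroup.mem_iInf.1 (hpow g) i
    have hR : Rels n (⟨ga ^ n, hi _⟩ : H i) ⟨gb ^ n, hi _⟩ ⟨gc ^ n, hi _⟩ ⟨gd ^ n, hi _⟩ :=
      Rels.of_injective (f := (H i).subtype) (Subgroup.subtype_injective _) (N34.rels_pow n)
    have hk := Mal.key hn (hR.map (N34.toMal.comp (f i)))
    have hze : cmt (⟨ga ^ n, hi _⟩ : H i) (cmt ⟨ga ^ n, hi _⟩ ⟨gc ^ n, hi _⟩) =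
        ⟨(N34.gz : N34) ^ (n ^ 3), Subgroup.mem_iInf.1 hz i⟩ := Subtype.ext (N34.cmt_pow n)
    have hfS : f i ⟨(N34.gz : N34) ^ (n ^ 3), Subgroup.mem_iInf.1 hz i⟩ ∈ N34.S := by
      rw [← hze, map_cmt, map_cmt]
      exact N34.cmt_cmt_mem' _ _ _
    rw [← map_cmt, ← map_cmt, hze, MonoidHom.comp_apply] at hk
    rw [Subgroup.map_le_iff_le_comap]
    rintro ⟨t, htH⟩ ⟨k, hk'⟩
    have ht : (⟨t, htH⟩ : H i) = ⟨(N34.gz : N34) ^ (n ^ 3), Subgroup.mem_iInf.1 hz i⟩ ^ k :=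
      Subtype.ext hk'.symm
    rw [Subgroup.mem_comap, ht, map_zpow]
    apply Subgroup.zpow_mem
    rcases hk with hk | hk
    · rw [N34.toMal_injOn hfS N34.S.one_mem (by rw [hk, map_one])]
      exact Subgroup.one_mem _
    · rw [N34.toMal_injOn hfS hzS (by rw [hk, hzM])]
      exact Subgroup.mem_zpowers _
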